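/- Let E be a nonempty finite set (with the discrete σ-algebra) and let (P_μ)_{μ∈𝒫(E)} be a nonlinear Markov transition kernel family on E satisfying the global nonlinear Dobrushin condition with some constant α ∈ (0,1] and the measure-Lipschitz condition with some constant λ ∈ [0,1]. Then there exists at least one stationary measure, i.e. some π ∈ 𝒫(E) with P_π π = π. -/

import Mathlib

open MeasureTheory ProbabilityTheory

/-- Total variation distance: `d_TV(μ,ν) = 2 ⨆_{A measurable} |μ(A) − ν(A)|`. -/
noncomputable def dTV {E : Type*} [MeasurableSpace E] (μ ν : Measure E) : ℝ :=
  2 * ⨆ A : {A : Set E // MeasurableSet A}, |(μ A.1).toReal - (ν A.1).toReal|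

section Scarf
variable {V I : Type*} [Fintype V] [DecidableEq V] [Fintype I] [DecidableEq I]

def ScDom (r : I → V → ℕ) (S : Finset V) : Prop := ∀ y, ∃ i, ∀ x ∈ S, r i y ≤ r i x

theorem sc_door (r : I → V → ℕ) (hr : ∀ i, Function.Injective (r i)) (s : I → V)
    (T : Finset V) (hT : ScDom r T) (hc : T.card + 1 = Fintype.card I)
    (t0 : V) (ht0 : t0 ∈ T) (hs : ∀ k a, k ≠ a → r k t0 < r k (s a)) :
    ∃ y z : V, y ≠ z ∧ y ∉ T ∧ z ∉ T ∧
      ∀ w, w ∉ T → (ScDom r (insert w T) ↔ w = y ∨ w = z) := by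
  have hm : ∀ i, ∃ x ∈ T, ∀ x' ∈ T, r i x ≤ r i x' := fun i =>
    Finset.exists_min_image T (r i) ⟨t0, ht0⟩
  choose m hmT hmle using hm
  have hsurj : ∀ y ∈ T, ∃ i, m i = y := by
    intro y hy
    obtain ⟨i, hi⟩ := hT y
    exact ⟨i, hr i (le_antisymm (hmle i y hy) (hi _ (hmT i)))⟩
  obtain ⟨i, -, j, -, hij, hmij⟩ := Finset.exists_ne_map_eq_of_card_lt_of_maps_to
    (s := (Finset.univ : Finset I)) (t := T) (f := m) (by rw [Finset.card_univ]; omega)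
    (fun i _ => hmT i)
  have himg : ∀ a b, a ≠ b → m a = m b → ∀ y ∈ T, ∃ k, k ≠ a ∧ m k = y := by
    intro a b hab hmab y hy
    obtain ⟨k, hk⟩ := hsurj y hy
    by_cases h : k = a
    · exact ⟨b, hab.symm, by rw [← hk, h, hmab]⟩
    · exact ⟨k, h, hk⟩
  have hinj : ∀ a b, a ≠ b → m a = m b → ∀ k l, k ≠ a → l ≠ a → m k = m l → k = l := by
    intro a b hab hmab
    have h1 : (Finset.univ.erase a).image m = T := by
      ext y
      simp only [Finset.mem_image, Finset.mem_erase, Finset.mem_univ, and_true]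
      constructor
      · rintro ⟨k, -, rfl⟩; exact hmT k
      · exact himg a b hab hmab y
    have h2 : Set.InjOn m (Finset.univ.erase a : Finset I) := by
      rw [← Finset.card_image_iff, h1, Finset.card_erase_of_mem (Finset.mem_univ _),
        Finset.card_univ]
      omega
    intro k l hk hl h
    exact h2 (by simpa using hk) (by simpa using hl) h
  have hM : ∀ a, ∃ y, (∀ k, k ≠ a → r k (m k) < r k y) ∧
      ∀ z, (∀ k, k ≠ a → r k (m k) < r k z) → r a z ≤ r a y := by
    intro a
    obtain ⟨y, hy, hy'⟩ := Finset.exists_max_image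
      (Finset.univ.filter fun z => ∀ k, k ≠ a → r k (m k) < r k z) (r a)
      ⟨s a, by simpa using fun k hk => (hmle k t0 ht0).trans_lt (hs k a hk)⟩
    exact ⟨y, by simpa using hy, fun z hz => hy' z (by simpa using hz)⟩
  choose Y hY1 hY2 using hM
  have hYT : ∀ a b, a ≠ b → m a = m b → Y a ∉ T := by
    intro a b hab hmab h
    obtain ⟨k, hk, hk'⟩ := himg a b hab hmab _ h
    have := hY1 a k hk
    rw [hk'] at this
    exact lt_irrefl _ this
  have hYle : ∀ a, ∀ x ∈ T, r a (Y a) ≤ r a x := by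
    intro a
    obtain ⟨k, hk⟩ := hT (Y a)
    by_cases h : k = a
    · exact h ▸ hk
    · exact absurd (hk _ (hmT k)) (not_le.2 (hY1 a k h))
  have hYdom : ∀ a, ScDom r (insert (Y a) T) := by
    intro a z
    by_cases hz : ∀ k, k ≠ a → r k (m k) < r k z
    · refine ⟨a, fun x hx => ?_⟩
      have := hY2 a z hz
      rcases Finset.mem_insert.1 hx with rfl | hx
      · exact this
      · exact this.trans (hYle a x hx)
    · push Not at hz
      obtain ⟨k, hk, hkz⟩ := hz
      refine ⟨k, fun x hx => ?_⟩
      rcases Finset.mem_insert.1 hx with rfl | hx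
      · exact hkz.trans (hY1 a k hk).le
      · exact hkz.trans (hmle k x hx)
  have key : ∀ w, w ∉ T → ScDom r (insert w T) → ∀ a b, a ≠ b → m a = m b →
      (∀ x ∈ T, r a w ≤ r a x) → w = Y a := by
    intro w hw hd a b hab hmab haw
    have h1 : ∀ k, k ≠ a → r k (m k) < r k w := by
      intro k hk
      obtain ⟨k', hk'⟩ := hd (m k)
      have e1 : m k' = m k := hr k' (le_antisymm (hmle k' _ (hmT k))
        (hk' _ (Finset.mem_insert_of_mem (hmT k'))))
      have e2 : k' ≠ a := by
        rintro rfl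
        have h3 := hk' w (Finset.mem_insert_self _ _)
        have h4 := haw _ (hmT k)
        exact hw (hr k' (le_antisymm h3 h4) ▸ hmT k)
      have e3 := hinj a b hab hmab k' k e2 hk e1
      subst e3
      refine lt_of_le_of_ne (hk' w (Finset.mem_insert_self _ _)) fun h => hw (hr _ h ▸ hmT _)
    refine hr a (le_antisymm (hY2 a w h1) ?_)
    obtain ⟨k, hk⟩ := hd (Y a)
    by_cases h : k = a
    · subst h; exact hk w (Finset.mem_insert_self _ _)
    · exact absurd (hk _ (Finset.mem_insert_of_mem (hmT k))) (not_le.2 (hY1 a k h))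
  refine ⟨Y i, Y j, ?_, hYT i j hij hmij, hYT j i hij.symm hmij.symm, ?_⟩
  · intro h
    have h1 := hY1 i j hij.symm
    have h2 := hYle j (m j) (hmT j)
    rw [h] at h1
    omega
  · intro w hw
    constructor
    · intro hd
      obtain ⟨a, ha⟩ := hd w
      have ha' : ∀ x ∈ T, r a w ≤ r a x := fun x hx => ha x (Finset.mem_insert_of_mem hx)
      by_cases h1 : a = i
      · subst h1; exact Or.inl (key w hw hd a j hij hmij ha')
      by_cases h2 : a = j
      · subst h2; exact Or.inr (key w hw hd a i hij.symm hmij.symm ha')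
      exfalso
      obtain ⟨k', hk'⟩ := hd (m a)
      have e1 : m k' = m a := hr k' (le_antisymm (hmle k' _ (hmT a))
        (hk' _ (Finset.mem_insert_of_mem (hmT k'))))
      have e2 : k' ≠ a := by
        rintro rfl
        have h3 := hk' w (Finset.mem_insert_self _ _)
        have h4 := ha' _ (hmT k')
        exact hw (hr k' (le_antisymm h3 h4) ▸ hmT k')
      by_cases h3 : k' = i
      · subst h3
        exact h2 (hinj k' j hij hmij a j h1 hij.symm (e1 ▸ hmij))
      · exact e2 (hinj i j hij hmij k' a h3 h1 e1)
    · rintro (rfl | rfl)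
      · exact hYdom i
      · exact hYdom j

theorem sc_room (c : V → I) (i0 : I) (S : Finset V) (hS : S.card = Fintype.card I)
    (hnc : S.image c ≠ Finset.univ) (T : Finset V) (hT : T.image c = Finset.univ.erase i0)
    (hTc : T.card + 1 = Fintype.card I) (hTS : T ⊆ S) :
    ∃ T', T ≠ T' ∧ T'.card + 1 = Fintype.card I ∧ T' ⊆ S ∧ ∀ U : Finset V, U.card + 1 = Fintype.card I → U ⊆ S →
      (U.image c = Finset.univ.erase i0 ↔ U = T ∨ U = T') := by
  obtain ⟨y, hy, rfl⟩ : ∃ y, y ∉ T ∧ insert y T = S := by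
    have : T.card < S.card := by omega
    obtain ⟨y, hyS, hy⟩ := Finset.exists_mem_notMem_of_card_lt_card this
    refine ⟨y, hy, Finset.eq_of_subset_of_card_le ?_ ?_⟩
    · exact Finset.insert_subset hyS hTS
    · rw [Finset.card_insert_of_notMem hy]; omega
  have hinj : Set.InjOn c T := by
    rw [← Finset.card_image_iff, hT, Finset.card_erase_of_mem (Finset.mem_univ _),
      Finset.card_univ]
    omega
  have hcy : c y ≠ i0 := by
    intro h
    apply hnc
    rw [Finset.image_insert, hT, h, Finset.insert_erase (Finset.mem_univ _)]
  have : c y ∈ T.image c := by rw [hT]; simpa using hcy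
  obtain ⟨z, hz, hzy⟩ := Finset.mem_image.1 this
  have hyz : y ≠ z := fun h => hy (h ▸ hz)
  refine ⟨insert y (T.erase z), fun h => hy (h ▸ Finset.mem_insert_self _ _), ?_, ?_, ?_⟩
  · rw [Finset.card_insert_of_notMem (fun h => hy (Finset.mem_of_mem_erase h)),
      Finset.card_erase_add_one hz, hTc]
  · exact Finset.insert_subset_insert _ (Finset.erase_subset _ _)
  intro U hU hUS
  have hE : ∃ u ∈ insert y T, U = (insert y T).erase u := by
    have : U.card < (insert y T).card := by omega
    obtain ⟨u, huS, hu⟩ := Finset.exists_mem_notMem_of_card_lt_card this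
    refine ⟨u, huS, Finset.eq_of_subset_of_card_le ?_ ?_⟩
    · intro v hv
      exact Finset.mem_erase.2 ⟨fun h => hu (h ▸ hv), hUS hv⟩
    · rw [Finset.card_erase_of_mem huS]; omega
  constructor
  · intro h
    obtain ⟨u, hu, rfl⟩ := hE
    rcases Finset.mem_insert.1 hu with rfl | hu1
    · left; rw [Finset.erase_insert hy]
    right
    have hyu : y ≠ u := fun h => hy (h ▸ hu1)
    rw [Finset.erase_insert_of_ne hyu] at h ⊢
    have h1 : c u ∈ T.image c := Finset.mem_image_of_mem _ hu1
    rw [hT, ← h] at h1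
    obtain ⟨v, hv, hvu⟩ := Finset.mem_image.1 h1
    rcases Finset.mem_insert.1 hv with rfl | hv
    · rw [hinj hz hu1 (hzy.trans hvu)]
    · have := hinj (Finset.mem_of_mem_erase hv) hu1 hvu
      exact absurd this (Finset.ne_of_mem_erase hv)
  · rintro (rfl | rfl)
    · exact hT
    · rw [Finset.image_insert, ← hzy, ← Finset.image_insert, Finset.insert_erase hz, hT]

theorem sc_main (r : I → V → ℕ) (hr : ∀ i, Function.Injective (r i)) (s : I → V)
    (hs0 : ∀ i v, r i (s i) ≤ r i v)
    (hs1 : ∀ k a v, v ∉ Set.range s → k ≠ a → r k v < r k (s a))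
    (c : V → I) (hcs : ∀ i, c (s i) = i) [Nonempty I] :
    ∃ S : Finset V, ScDom r S ∧ S.image c = Finset.univ := by
  classical
  by_contra hcon
  push Not at hcon
  obtain ⟨i0⟩ := ‹Nonempty I›
  have hsinj : Function.Injective s := fun a b h => by rw [← hcs a, h, hcs]
  set R : Finset (Finset V) := Finset.univ.filter fun S => ScDom r S ∧ S.card = Fintype.card I
    with hR
  set D : Finset (Finset V) := Finset.univ.filter fun T => ScDom r T ∧
    T.card + 1 = Fintype.card I ∧ T.image c = Finset.univ.erase i0 with hD
  have hcount := Finset.sum_card_bipartiteAbove_eq_sum_card_bipartiteBelow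
    (s := D) (t := R) (fun T S => T ⊆ S)
  have hmono : ∀ S T : Finset V, T ⊆ S → ScDom r S → ScDom r T := by
    intro S T h hS y
    obtain ⟨i, hi⟩ := hS y
    exact ⟨i, fun x hx => hi x (h hx)⟩
  have heven : Even (∑ S ∈ R, (D.bipartiteBelow (fun T S => T ⊆ S) S).card) := by
    apply Finset.even_sum
    intro S hS
    obtain ⟨hSd, hSc⟩ := (Finset.mem_filter.1 hS).2
    rcases (D.bipartiteBelow (fun T S => T ⊆ S) S).eq_empty_or_nonempty with h | ⟨T, hT⟩
    · rw [h]; simp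
    · rw [Finset.bipartiteBelow, Finset.mem_filter] at hT
      obtain ⟨hTD, hTS⟩ := hT
      obtain ⟨hTd, hTc, hTi⟩ := (Finset.mem_filter.1 hTD).2
      obtain ⟨T', hne, hc', hs', hT'⟩ := sc_room c i0 S hSc (hcon S hSd) T hTi hTc hTS
      have hcT' : T' ∈ D ∧ T' ⊆ S := ⟨Finset.mem_filter.2 ⟨Finset.mem_univ _,
        hmono _ _ hs' hSd, hc', (hT' T' hc' hs').2 (Or.inr rfl)⟩, hs'⟩
      have : D.bipartiteBelow (fun T S => T ⊆ S) S = {T, T'} := by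
        ext U
        rw [Finset.bipartiteBelow, Finset.mem_filter, Finset.mem_insert, Finset.mem_singleton]
        constructor
        · rintro ⟨hU, hUS⟩
          obtain ⟨hUd, hUc, hUi⟩ := (Finset.mem_filter.1 hU).2
          exact (hT' U hUc hUS).1 hUi
        · rintro (rfl | rfl)
          · exact ⟨hTD, hTS⟩
          · exact hcT'
      rw [this, Finset.card_pair hne]
      exact even_two
  set T0 : Finset V := (Finset.univ.erase i0).image s with hT0
  have hT0c : T0.card + 1 = Fintype.card I := by
    rw [hT0, Finset.card_image_of_injective _ hsinj,
      Finset.card_erase_add_one (Finset.mem_univ _), Finset.card_univ]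
  have hmemT0 : ∀ v, v ∈ T0 ↔ ∃ k, k ≠ i0 ∧ s k = v := by
    intro v; simp [hT0]
  have hmemT0' : ∀ k, k ≠ i0 → s k ∈ T0 := fun k hk => (hmemT0 _).2 ⟨k, hk, rfl⟩
  have hi0T0 : s i0 ∉ T0 := by
    rw [hmemT0]; rintro ⟨k, hk, h⟩; exact hk (hsinj h)
  -- elements outside T0 are below T0 in order i0
  have hout : ∀ z, z ∉ T0 → ∀ x ∈ T0, r i0 z ≤ r i0 x := by
    intro z hz x hx
    obtain ⟨k, hk, rfl⟩ := (hmemT0 _).1 hx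
    by_cases h : z ∈ Set.range s
    · obtain ⟨l, rfl⟩ := h
      by_cases hl : l = i0
      · subst hl; exact hs0 _ _
      · exact absurd (hmemT0' l hl) hz
    · exact (hs1 i0 k z h hk.symm).le
  obtain ⟨y0, hy0, hy0max⟩ := Finset.exists_max_image (Finset.univ \ T0) (r i0)
    ⟨s i0, by simpa using hi0T0⟩
  have hy0T : y0 ∉ T0 := by simpa using hy0
  have hy0max' : ∀ z, z ∉ T0 → r i0 z ≤ r i0 y0 := fun z hz => hy0max z (by simpa using hz)
  have hdomy0 : ScDom r (insert y0 T0) := by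
    intro z
    by_cases hz : z ∈ T0
    · obtain ⟨k, hk, rfl⟩ := (hmemT0 _).1 hz
      exact ⟨k, fun x _ => hs0 _ _⟩
    · refine ⟨i0, fun x hx => ?_⟩
      rcases Finset.mem_insert.1 hx with rfl | hx
      · exact hy0max' z hz
      · exact hout z hz x hx
  have hins : ∀ T S : Finset V, T.card + 1 = Fintype.card I → S.card = Fintype.card I →
      T ⊆ S → ∃ w, w ∉ T ∧ S = insert w T := by
    intro T S h1 h2 h3
    have : T.card < S.card := by omega
    obtain ⟨y, hyS, hy⟩ := Finset.exists_mem_notMem_of_card_lt_card this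
    refine ⟨y, hy, (Finset.eq_of_subset_of_card_le ?_ ?_).symm⟩
    · exact Finset.insert_subset hyS h3
    · rw [Finset.card_insert_of_notMem hy]; omega
  have hT0D : T0 ∈ D := by
    refine Finset.mem_filter.2 ⟨Finset.mem_univ _, hmono _ _ (Finset.subset_insert _ _) hdomy0,
      hT0c, ?_⟩
    rw [hT0, Finset.image_image]
    have : c ∘ s = id := funext hcs
    rw [this, Finset.image_id]
  have h1 : (R.bipartiteAbove (fun T S => T ⊆ S) T0) = {insert y0 T0} := by
    ext S
    rw [Finset.bipartiteAbove, Finset.mem_filter, Finset.mem_singleton, hR, Finset.mem_filter]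
    constructor
    · rintro ⟨⟨-, hSd, hSc⟩, hS⟩
      obtain ⟨w, hw, rfl⟩ := hins _ _ hT0c hSc hS
      congr 1
      obtain ⟨k, hk⟩ := hSd y0
      have hk0 : k = i0 := by
        by_contra hne
        have := hk _ (Finset.mem_insert_of_mem (hmemT0' k hne))
        exact hy0T (hr k (le_antisymm this (hs0 _ _)) ▸ hmemT0' k hne)
      subst hk0
      exact hr _ (le_antisymm (hy0max' w hw) (hk w (Finset.mem_insert_self _ _)))
    · rintro rfl
      exact ⟨⟨Finset.mem_univ _, hdomy0, by rw [Finset.card_insert_of_notMem hy0T, hT0c]⟩,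
        Finset.subset_insert _ _⟩
  have h2 : Even (∑ T ∈ D.erase T0, (R.bipartiteAbove (fun T S => T ⊆ S) T).card) := by
    apply Finset.even_sum
    intro T hT
    obtain ⟨hTne, hTD⟩ := Finset.mem_erase.1 hT
    obtain ⟨hTd, hTc, hTi⟩ := (Finset.mem_filter.1 hTD).2
    obtain ⟨t0, ht0, ht0s⟩ : ∃ t0 ∈ T, t0 ∉ Set.range s := by
      by_contra hno
      push Not at hno
      apply hTne
      refine Finset.eq_of_subset_of_card_le ?_ (by omega)
      intro x hx
      obtain ⟨k, rfl⟩ := hno x hx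
      apply hmemT0'
      have := Finset.mem_image_of_mem c hx
      rw [hTi, hcs] at this
      exact Finset.ne_of_mem_erase this
    obtain ⟨y, z, hyz, hy, hz, hiff⟩ := sc_door r hr s T hTd hTc t0 ht0
      (fun k a hka => hs1 k a t0 ht0s hka)
    have : R.bipartiteAbove (fun T S => T ⊆ S) T = {insert y T, insert z T} := by
      ext S
      rw [Finset.bipartiteAbove, Finset.mem_filter, Finset.mem_insert, Finset.mem_singleton, hR,
        Finset.mem_filter]
      constructor
      · rintro ⟨⟨-, hSd, hSc⟩, hS⟩
        obtain ⟨w, hw, rfl⟩ := hins _ _ hTc hSc hS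
        rcases (hiff w hw).1 hSd with rfl | rfl
        · exact Or.inl rfl
        · exact Or.inr rfl
      · rintro (rfl | rfl)
        · exact ⟨⟨Finset.mem_univ _, (hiff _ hy).2 (Or.inl rfl),
            by rw [Finset.card_insert_of_notMem hy, hTc]⟩, Finset.subset_insert _ _⟩
        · exact ⟨⟨Finset.mem_univ _, (hiff _ hz).2 (Or.inr rfl),
            by rw [Finset.card_insert_of_notMem hz, hTc]⟩, Finset.subset_insert _ _⟩
    rw [this, Finset.card_pair]
    · exact even_two
    · intro h
      have : y ∈ insert z T := h ▸ Finset.mem_insert_self _ _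
      rcases Finset.mem_insert.1 this with h | h
      · exact hyz h
      · exact hy h
  rw [← hcount, ← Finset.add_sum_erase _ _ hT0D, h1, Finset.card_singleton] at heven
  exact (Nat.not_even_iff_odd.2 (odd_one.add_even h2)) heven

theorem scarf {X I : Type*} [Fintype X] [Fintype I] [Nonempty I]
    (r : I → X → ℕ) (hr : ∀ i, Function.Injective (r i)) (c : X → I) :
    ∃ (σ : Finset X) (C : Finset I), (∀ y, ∃ i ∈ C, ∀ x ∈ σ, r i y ≤ r i x) ∧
      ∀ i ∈ C, ∃ x ∈ σ, c x = i := by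
  classical
  let B : ℕ := ∑ i, ∑ x, r i x
  have hB : ∀ i x, r i x ≤ B := fun i x =>
    (Finset.single_le_sum (f := fun x => r i x) (fun _ _ => Nat.zero_le _)
      (Finset.mem_univ x)).trans
    (Finset.single_le_sum (f := fun i => ∑ x, r i x) (fun _ _ => Nat.zero_le _)
      (Finset.mem_univ i))
  let e := Fintype.equivFin I
  let R : I → X ⊕ I → ℕ := fun i v =>
    Sum.elim (fun x => r i x + 1) (fun k => if k = i then 0 else B + 2 + (e k : ℕ)) v
  have hRl : ∀ i x, R i (Sum.inl x) = r i x + 1 := fun _ _ => rfl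
  have hRr : ∀ i k, R i (Sum.inr k) = if k = i then 0 else B + 2 + (e k : ℕ) := fun _ _ => rfl
  obtain ⟨S, hS, hc⟩ := sc_main (V := X ⊕ I) R (by
      rintro i (x | k) (y | l) h
      · rw [hRl, hRl] at h
        rw [hr i (by omega : r i x = r i y)]
      · rw [hRl, hRr] at h
        have := hB i x
        split_ifs at h <;> omega
      · rw [hRl, hRr] at h
        have := hB i y
        split_ifs at h <;> omega
      · rw [hRr, hRr] at h
        split_ifs at h with h1 h2 h2
        · rw [h1, h2]
        · omega
        · omega
        · rw [e.injective (Fin.ext (by omega : (e k : ℕ) = e l))])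
    Sum.inr (by intro i v; rw [hRr]; simp) (by
      rintro k a (x | l) hv hka
      · rw [hRl, hRr, if_neg hka.symm]
        have := hB k x
        omega
      · exact absurd ⟨l, rfl⟩ hv)
    (Sum.elim c id) (fun i => rfl)
  refine ⟨Finset.univ.filter fun x => Sum.inl x ∈ S,
    Finset.univ.filter fun i => Sum.inr i ∉ S, ?_, ?_⟩
  · intro y
    obtain ⟨i, hi⟩ := hS (Sum.inl y)
    refine ⟨i, ?_, ?_⟩
    · simp only [Finset.mem_filter, Finset.mem_univ, true_and]
      intro h
      have := hi _ h
      rw [hRl, hRr, if_pos rfl] at this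
      omega
    · intro x hx
      simp only [Finset.mem_filter, Finset.mem_univ, true_and] at hx
      have := hi _ hx
      rw [hRl, hRl] at this
      omega
  · intro i hi
    simp only [Finset.mem_filter, Finset.mem_univ, true_and] at hi
    have : i ∈ S.image (Sum.elim c id) := by rw [hc]; exact Finset.mem_univ _
    obtain ⟨v | k, hv, hvi⟩ := Finset.mem_image.1 this
    · exact ⟨v, by simpa using hv, hvi⟩
    · exact absurd ((show k = i from hvi) ▸ hv) hi

/-- grid version -/
theorem scarf_grid {I : Type*} [Fintype I] [Nonempty I] (N : ℕ)
    (c : (I → ℕ) → I) :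
    ∃ (x0 : I → ℕ) (C : Finset I), ∑ i, x0 i = N ∧
      (∀ i ∉ C, x0 i ≤ Fintype.card I) ∧
      ∀ i ∈ C, ∃ x : I → ℕ, ∑ i, x i = N ∧ c x = i ∧
        ∀ j, x j ≤ x0 j + Fintype.card I ∧ x0 j ≤ x j + Fintype.card I := by
  classical
  let X := {x : I → Fin (N + 1) // ∑ i, (x i : ℕ) = N}
  let K := Fintype.card X
  let e := Fintype.equivFin X
  let r : I → X → ℕ := fun i x => K * (x.1 i : ℕ) + (e x : ℕ)
  have hmod : ∀ i x, r i x % K = e x := fun i x => by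
    simp only [r, Nat.mul_add_mod]; exact Nat.mod_eq_of_lt (e x).2
  have hlt : ∀ i (x y : X), r i x ≤ r i y → (x.1 i : ℕ) ≤ y.1 i := by
    intro i x y h
    have hK : 0 < K := lt_of_le_of_lt (Nat.zero_le _) (e x).2
    have hd : ∀ x, r i x / K = x.1 i := fun x => by
      simp only [r]
      rw [Nat.mul_add_div hK, Nat.div_eq_of_lt (e x).2, add_zero]
    rw [← hd, ← hd]
    exact Nat.div_le_div_right h
  obtain ⟨σ, C, hdom, hcol⟩ := scarf r (fun i x y h => e.injective (Fin.ext (by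
    rw [← hmod i x, ← hmod i y, h]))) (fun x => c fun i => (x.1 i : ℕ))
  have hmk : ∀ x : I → ℕ, ∑ i, x i = N → ∃ y : X, ∀ i, (y.1 i : ℕ) = x i := by
    intro x hx
    have hxi : ∀ i, x i < N + 1 := fun i => Nat.lt_succ_of_le (hx ▸
      Finset.single_le_sum (fun _ _ => Nat.zero_le _) (Finset.mem_univ i))
    exact ⟨⟨fun i => ⟨x i, hxi i⟩, hx⟩, fun i => rfl⟩
  obtain ⟨i1⟩ := ‹Nonempty I›
  obtain ⟨y1, hy1⟩ := hmk (fun i => if i = i1 then N else 0) (by simp)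
  obtain ⟨i2, hi2, -⟩ := hdom y1
  obtain ⟨x0, hx0, -⟩ := hcol i2 hi2
  have hm : ∀ i, ∃ x ∈ σ, ∀ x' ∈ σ, (x.1 i : ℕ) ≤ x'.1 i := fun i =>
    Finset.exists_min_image σ (fun x => (x.1 i : ℕ)) ⟨x0, hx0⟩
  choose m hmσ hmle using hm
  have hsum : N < ∑ i ∈ C, ((m i).1 i : ℕ) + Fintype.card I := by
    by_contra hcon
    push Not at hcon
    have hC : C.card ≤ Fintype.card I := Finset.card_le_univ C
    have h1 : ∑ i ∈ C, (((m i).1 i : ℕ) + 1) ≤ N := by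
      rw [Finset.sum_add_distrib]; simp; omega
    obtain ⟨d, hd⟩ := Nat.exists_eq_add_of_le h1
    obtain ⟨y, hy⟩ := hmk (fun i => (if i ∈ C then ((m i).1 i : ℕ) + 1 else 0) +
      if i = i2 then d else 0) (by
        rw [Finset.sum_add_distrib, Finset.sum_ite_mem, Finset.univ_inter]; simp [hd.symm])
    obtain ⟨i, hiC, hi⟩ := hdom y
    have := hlt _ _ _ (hi _ (hmσ i))
    rw [hy, if_pos hiC] at this
    omega
  have hbd : ∀ x ∈ σ, (∀ i ∉ C, (x.1 i : ℕ) ≤ Fintype.card I) ∧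
      ∀ i ∈ C, (x.1 i : ℕ) ≤ (m i).1 i + Fintype.card I := by
    intro x hx
    have hxN := x.2
    rw [← Finset.sum_add_sum_compl C] at hxN
    constructor
    · intro i hi
      have h1 : ∑ i ∈ C, ((m i).1 i : ℕ) ≤ ∑ i ∈ C, (x.1 i : ℕ) :=
        Finset.sum_le_sum fun i _ => hmle i x hx
      have h2 := Finset.single_le_sum (s := Cᶜ) (f := fun i => (x.1 i : ℕ))
        (fun _ _ => Nat.zero_le _) (Finset.mem_compl.2 hi)
      omega
    · intro i hi
      have h1 : ∑ i ∈ C.erase i, ((m i).1 i : ℕ) ≤ ∑ i ∈ C.erase i, (x.1 i : ℕ) :=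
        Finset.sum_le_sum fun i _ => hmle i x hx
      rw [← Finset.add_sum_erase C _ hi] at hxN hsum
      omega
  refine ⟨fun i => x0.1 i, C, x0.2, (hbd x0 hx0).1, ?_⟩
  intro i hi
  obtain ⟨x, hx, hxc⟩ := hcol i hi
  refine ⟨fun i => x.1 i, x.2, hxc, fun j => ?_⟩
  change (x.1 j : ℕ) ≤ x0.1 j + Fintype.card I ∧ (x0.1 j : ℕ) ≤ x.1 j + Fintype.card I
  by_cases hj : j ∈ C
  · have a1 := (hbd x hx).2 j hj
    have a2 := (hbd x0 hx0).2 j hj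
    have a3 := hmle j x hx
    have a4 := hmle j x0 hx0
    constructor <;> omega
  · have a1 := (hbd x hx).1 j hj
    have a2 := (hbd x0 hx0).1 j hj
    constructor <;> omega

theorem brouwer_simplex {I : Type*} [Fintype I] [Nonempty I] (f : (I → ℝ) → (I → ℝ))
    (hf : ContinuousOn f (stdSimplex ℝ I)) (hmap : ∀ x ∈ stdSimplex ℝ I, f x ∈ stdSimplex ℝ I) :
    ∃ x ∈ stdSimplex ℝ I, f x = x := by
  classical
  have hcpt : IsCompact (stdSimplex ℝ I) := isCompact_stdSimplex ℝ I
  have huc := hcpt.uniformContinuousOn_of_continuous hf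
  rw [Metric.uniformContinuousOn_iff] at huc
  have happrox : ∀ ε > 0, ∃ x ∈ stdSimplex ℝ I, ∀ i, x i - f x i ≤ ε := by
    intro ε hε
    obtain ⟨δ, hδ, hfδ⟩ := huc (ε / 2) (half_pos hε)
    set n : ℝ := (Fintype.card I : ℝ) with hn
    obtain ⟨N, hN⟩ := exists_nat_gt (n / min δ (ε / 2))
    have hmin : 0 < min δ (ε / 2) := lt_min hδ (half_pos hε)
    have hn0 : 0 ≤ n := Nat.cast_nonneg _
    have hNpos : (0 : ℝ) < N := lt_of_le_of_lt (div_nonneg hn0 hmin.le) hN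
    have hnN : n / N < min δ (ε / 2) := by
      rw [div_lt_iff₀ hmin] at hN
      rw [div_lt_iff₀ hNpos]; linarith
    have hn1 : n / N < δ := hnN.trans_le (min_le_left _ _)
    have hn2 : n / N < ε / 2 := hnN.trans_le (min_le_right _ _)
    let p : (I → ℕ) → I → ℝ := fun x i => (x i : ℝ) / N
    have hp : ∀ x : I → ℕ, ∑ i, x i = N → p x ∈ stdSimplex ℝ I := by
      intro x hx
      refine ⟨fun i => by positivity, ?_⟩
      simp only [p]
      rw [← Finset.sum_div, ← Nat.cast_sum, hx, div_self hNpos.ne']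
    have hcex : ∀ x : I → ℕ, ∃ i, ∑ i, x i = N → p x i ≤ f (p x) i := by
      intro x
      by_cases hx : ∑ i, x i = N
      · by_contra hcon
        push Not at hcon
        have h1 : ∑ i, f (p x) i < ∑ i, p x i :=
          Finset.sum_lt_sum_of_nonempty Finset.univ_nonempty fun i _ => (hcon i).2
        rw [(hp x hx).2, (hmap _ (hp x hx)).2] at h1
        exact lt_irrefl _ h1
      · exact ⟨Classical.arbitrary I, fun h => absurd h hx⟩
    choose c hc using hcex
    obtain ⟨x0, C, hx0, hnC, hC⟩ := scarf_grid N c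
    refine ⟨p x0, hp x0 hx0, fun i => ?_⟩
    by_cases hi : i ∈ C
    · obtain ⟨x, hx, hxc, hxx⟩ := hC i hi
      have hclose : ∀ j, |p x j - p x0 j| ≤ n / N := by
        intro j
        simp only [p]
        rw [← sub_div, abs_div, abs_of_pos hNpos]
        gcongr
        obtain ⟨h1, h2⟩ := hxx j
        have h1' : (x j : ℝ) ≤ x0 j + n := by rw [hn]; exact_mod_cast h1
        have h2' : (x0 j : ℝ) ≤ x j + n := by rw [hn]; exact_mod_cast h2
        rw [abs_le]; constructor <;> linarith
      have hd : dist (p x) (p x0) < δ := by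
        refine lt_of_le_of_lt ((dist_pi_le_iff (div_nonneg hn0 hNpos.le)).2 fun j => ?_) hn1
        rw [Real.dist_eq]; exact hclose j
      have h1 := (dist_le_pi_dist _ _ i).trans_lt (hfδ _ (hp x hx) _ (hp x0 hx0) hd)
      rw [Real.dist_eq, abs_lt] at h1
      have h2 := hc x hx
      rw [hxc] at h2
      have h3 := abs_le.1 (hclose i)
      linarith [h1.1, h1.2, h3.1, h3.2]
    · have h1 : p x0 i ≤ n / N := by
        simp only [p]
        gcongr
        rw [hn]; exact_mod_cast hnC i hi
      have h2 := (hmap _ (hp x0 hx0)).1 i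
      linarith
  let h : (I → ℝ) → ℝ := fun x => ∑ i, max 0 (x i - f x i)
  have hcont : ContinuousOn h (stdSimplex ℝ I) := by
    refine continuousOn_finsetSum _ fun i _ => ?_
    refine ContinuousOn.sup continuousOn_const ?_
    exact ((continuous_apply i).continuousOn).sub ((continuous_apply i).comp_continuousOn hf)
  obtain ⟨x, hx, hxmin⟩ := hcpt.exists_isMinOn
    (by obtain ⟨y, hy, -⟩ := happrox 1 one_pos; exact ⟨y, hy⟩) hcont
  have hx0 : h x ≤ 0 := by
    refine le_of_forall_pos_le_add fun ε hε => ?_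
    have hcard : (0 : ℝ) < Fintype.card I := by exact_mod_cast Fintype.card_pos
    obtain ⟨y, hy, hyε⟩ := happrox (ε / Fintype.card I) (by positivity)
    refine (hxmin hy).trans ?_
    calc h y ≤ ∑ i : I, ε / Fintype.card I :=
          Finset.sum_le_sum fun i _ => max_le (by positivity) (hyε i)
      _ = 0 + ε := by
          rw [Finset.sum_const, Finset.card_univ, nsmul_eq_mul]; field_simp; ring
  have hle : ∀ i, x i ≤ f x i := by
    intro i
    have := Finset.single_le_sum (f := fun i => max 0 (x i - f x i))
      (fun _ _ => le_max_left _ _) (Finset.mem_univ i)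
    have h2 := (le_max_right 0 (x i - f x i)).trans (this.trans hx0)
    linarith
  refine ⟨x, hx, ?_⟩
  have hsum : ∑ i, x i = ∑ i, f x i := by rw [hx.2, (hmap x hx).2]
  funext i
  exact ((Finset.sum_eq_sum_iff_of_le fun i _ => hle i).1 hsum i (Finset.mem_univ i)).symm

end Scarf

theorem dTV_ge {E : Type*} [MeasurableSpace E] (μ ν : Measure E) [IsProbabilityMeasure μ]
    [IsProbabilityMeasure ν] (A : Set E) (hA : MeasurableSet A) :
    2 * |(μ A).toReal - (ν A).toReal| ≤ dTV μ ν := by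
  unfold dTV
  have hb : BddAbove (Set.range fun A : {A : Set E // MeasurableSet A} =>
      |(μ A.1).toReal - (ν A.1).toReal|) := by
    refine ⟨1, ?_⟩
    rintro _ ⟨B, rfl⟩
    have h1 : (μ B.1).toReal ≤ 1 := measureReal_le_one (μ := μ)
    have h2 : (ν B.1).toReal ≤ 1 := measureReal_le_one (μ := ν)
    have h3 : 0 ≤ (μ B.1).toReal := ENNReal.toReal_nonneg
    have h4 : 0 ≤ (ν B.1).toReal := ENNReal.toReal_nonneg
    simp only
    rw [abs_le]; constructor <;> linarith
  have := le_ciSup hb ⟨A, hA⟩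
  simp only at this
  linarith

noncomputable def vecMeas {E : Type*} [Fintype E] [MeasurableSpace E] (p : E → ℝ) : Measure E :=
  ∑ i, ENNReal.ofReal (p i) • Measure.dirac i

theorem vecMeas_apply {E : Type*} [Fintype E] [MeasurableSpace E]
    (p : E → ℝ) (hp : ∀ i, 0 ≤ p i) (A : Set E) (hA : MeasurableSet A) :
    (vecMeas p A).toReal = ∑ i, p i * A.indicator 1 i := by
  classical
  unfold vecMeas
  rw [Measure.finsetSum_apply, ENNReal.toReal_sum]
  · refine Finset.sum_congr rfl fun i _ => ?_
    rw [Measure.smul_apply, Measure.dirac_apply' _ hA, smul_eq_mul, ENNReal.toReal_mul,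
      ENNReal.toReal_ofReal (hp i)]
    by_cases h : i ∈ A <;> simp [h]
  · intro i _
    rw [Measure.smul_apply, Measure.dirac_apply' _ hA, smul_eq_mul]
    by_cases h : i ∈ A <;> simp [h]

theorem vecMeas_prob {E : Type*} [Fintype E] [MeasurableSpace E]
    (p : E → ℝ) (hp : p ∈ stdSimplex ℝ E) : IsProbabilityMeasure (vecMeas p) := by
  constructor
  unfold vecMeas
  rw [Measure.finsetSum_apply]
  simp only [Measure.smul_apply, measure_univ, smul_eq_mul, mul_one]
  rw [← ENNReal.ofReal_sum_of_nonneg fun i _ => hp.1 i, hp.2, ENNReal.ofReal_one]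

theorem dTV_vecMeas {E : Type*} [Fintype E] [MeasurableSpace E]
    (p q : E → ℝ) (hp : p ∈ stdSimplex ℝ E) (hq : q ∈ stdSimplex ℝ E) :
    dTV (vecMeas p) (vecMeas q) ≤ 2 * ∑ i, |p i - q i| := by
  unfold dTV
  have : Nonempty {A : Set E // MeasurableSet A} := ⟨⟨∅, MeasurableSet.empty⟩⟩
  gcongr
  refine ciSup_le fun A => ?_
  rw [vecMeas_apply p hp.1 _ A.2, vecMeas_apply q hq.1 _ A.2, ← Finset.sum_sub_distrib]
  refine (Finset.abs_sum_le_sum_abs _ _).trans (Finset.sum_le_sum fun i _ => ?_)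
  by_cases h : i ∈ A.1 <;> simp [h]

/-- On a nonempty finite state space (with the discrete σ-algebra), any nonlinear Markov
kernel family satisfying the global nonlinear Dobrushin condition with some `α ∈ (0,1]`
and the measure-Lipschitz condition with some `lam ∈ [0,1]` has at least one stationary
measure. -/
theorem stmt16 {E : Type*} [Fintype E] [Nonempty E] [MeasurableSpace E]
    [MeasurableSingletonClass E]
    (P : Measure E → Kernel E E) (hMarkov : ∀ μ, IsMarkovKernel (P μ))
    (α lam : ℝ) (hα0 : 0 < α) (hα1 : α ≤ 1) (hlam0 : 0 ≤ lam) (hlam1 : lam ≤ 1)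
    (hDobr : ∀ μ ν : Measure E, IsProbabilityMeasure μ → IsProbabilityMeasure ν →
      ∀ x y : E, dTV ((P μ) x) ((P ν) y) ≤ 2 * (1 - α))
    (hLip : ∀ μ ν : Measure E, IsProbabilityMeasure μ → IsProbabilityMeasure ν →
      ∀ x : E, dTV ((P μ) x) ((P ν) x) ≤ lam * dTV μ ν) :
    ∃ π : Measure E, IsProbabilityMeasure π ∧ π.bind ⇑(P π) = π := by
  classical
  let g : E → E → (E → ℝ) → ℝ := fun i j p => ((P (vecMeas p)) i {j}).toReal
  have hg : ∀ i j, ContinuousOn (g i j) (stdSimplex ℝ E) := by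
    intro i j p hp
    have hbound : ∀ q ∈ stdSimplex ℝ E, dist (g i j q) (g i j p) ≤ ∑ k, |q k - p k| := by
      intro q hq
      have := vecMeas_prob p hp
      have := vecMeas_prob q hq
      have h1 := dTV_ge (P (vecMeas q) i) (P (vecMeas p) i) {j} (measurableSet_singleton j)
      have h2 := hLip (vecMeas q) (vecMeas p) inferInstance inferInstance i
      have h3 := dTV_vecMeas q p hq hp
      have h4 : lam * dTV (vecMeas q) (vecMeas p) ≤ lam * (2 * ∑ k, |q k - p k|) :=
        mul_le_mul_of_nonneg_left h3 hlam0
      have h5 : lam * (2 * ∑ k, |q k - p k|) ≤ 1 * (2 * ∑ k, |q k - p k|) :=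
        mul_le_mul_of_nonneg_right hlam1 (by positivity)
      rw [Real.dist_eq]
      simp only [g]
      linarith
    have hlim : Filter.Tendsto (fun q : E → ℝ => ∑ k, |q k - p k|)
        (nhdsWithin p (stdSimplex ℝ E)) (nhds 0) := by
      have : Continuous fun q : E → ℝ => ∑ k, |q k - p k| := by fun_prop
      have h0 := this.tendsto p
      simp only [sub_self, abs_zero, Finset.sum_const_zero] at h0
      exact h0.mono_left nhdsWithin_le_nhds
    rw [ContinuousWithinAt, tendsto_iff_dist_tendsto_zero]
    refine squeeze_zero' (Filter.Eventually.of_forall fun _ => dist_nonneg) ?_ hlim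
    filter_upwards [self_mem_nhdsWithin] with q hq using hbound q hq
  have hgsum : ∀ i p, ∑ j, g i j p = 1 := by
    intro i p
    have h1 : ∑ j, (P (vecMeas p) i) {j} = 1 := by
      rw [sum_measure_singleton, Finset.coe_univ, measure_univ]
    simp only [g]
    rw [← ENNReal.toReal_sum (fun j _ => measure_ne_top _ _), h1, ENNReal.toReal_one]
  have hg0 : ∀ i j p, 0 ≤ g i j p := fun _ _ _ => ENNReal.toReal_nonneg
  obtain ⟨p, hp, hfix⟩ := brouwer_simplex (fun p j => ∑ i, p i * g i j p)
    (by
      refine continuousOn_pi.2 fun j => continuousOn_finsetSum _ fun i _ => ?_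
      exact (continuous_apply i).continuousOn.mul (hg i j))
    (by
      intro p hp
      refine ⟨fun j => Finset.sum_nonneg fun i _ => mul_nonneg (hp.1 i) (hg0 i j p), ?_⟩
      rw [Finset.sum_comm]
      simp only [← Finset.mul_sum, hgsum, mul_one]
      exact hp.2)
  have hprob := vecMeas_prob p hp
  refine ⟨vecMeas p, hprob, ?_⟩
  have hs : ∀ j, vecMeas p {j} = ENNReal.ofReal (p j) := by
    intro j
    rw [← ENNReal.ofReal_toReal (measure_ne_top (vecMeas p) {j}),
      vecMeas_apply p hp.1 _ (measurableSet_singleton j)]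
    congr 1
    rw [Finset.sum_eq_single j]
    · simp
    · intro b _ hb; simp [hb]
    · simp
  refine Measure.ext_of_singleton fun j => ?_
  rw [Measure.bind_apply (measurableSet_singleton j) (Kernel.aemeasurable _),
    lintegral_fintype, hs]
  conv_rhs => rw [← hfix]
  rw [ENNReal.ofReal_sum_of_nonneg fun i _ => mul_nonneg (hp.1 i) (hg0 i j p)]
  refine Finset.sum_congr rfl fun i _ => ?_
  rw [hs, ENNReal.ofReal_mul (hp.1 i), mul_comm, ENNReal.ofReal_toReal (measure_ne_top _ _)]
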